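/- arXiv:1408.2611 — 4 statements merged into one kernel-verified Lean document; each statement's English description precedes it below -/
import Mathlib

section
/- Let F be the map F(Q,R) = QR defined on pairs (Q,R) where Q is an n×n real orthogonal matrix and R is an n×n real upper triangular matrix with non-negative diagonal entries. Then F is proper: for every compact set K of n×n real matrices, the preimage F⁻¹(K) is compact (as a subset of the product of the orthogonal group with the closed set of upper triangular matrices with non-negative diagonal entries). -/
/-!
The orthogonal group `O(n)` is compact (`isCompact_orthogonal`), and for orthogonal `Q` the factor
`R` is recovered continuously from the product as `R = Qᵀ (Q R)`. So the preimage of `K` is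
contained in a continuous image of the compact set `O(n) × K`. It is also closed, being cut out by
closed conditions on `(Q, R)`, hence it is compact.
-/

open Matrix

/-- The orthogonal group is closed, and its entries lie in `[-1, 1]` because the columns of an
orthogonal matrix are unit vectors. -/
lemma isCompact_orthogonal (n : ℕ) :
    IsCompact {Q : Matrix (Fin n) (Fin n) ℝ | Qᵀ * Q = 1} := by
  have hbox : IsCompact {Q : Matrix (Fin n) (Fin n) ℝ | ∀ i, Q i ∈ {v : Fin n → ℝ |
      ∀ j, v j ∈ Set.Icc (-1 : ℝ) 1}} :=
    isCompact_pi_infinite fun _ => isCompact_pi_infinite fun _ => isCompact_Icc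
  refine hbox.of_isClosed_subset
    (isClosed_eq (by fun_prop) continuous_const) fun Q hQ i j => ?_
  have hcol : ∑ k, Q k j * Q k j = 1 := by
    have h := congrFun (congrFun hQ j) j
    simpa [Matrix.mul_apply] using h
  have hle : Q i j * Q i j ≤ ∑ k, Q k j * Q k j :=
    Finset.single_le_sum (f := fun k => Q k j * Q k j)
      (fun k _ => mul_self_nonneg _) (Finset.mem_univ i)
  exact abs_le.mp (abs_le_one_iff_mul_self_le_one.mpr (hle.trans hcol.le))

/-- Properness of the QR multiplication map `F(Q,R) = Q*R`:
the preimage of any compact set of matrices, inside the (closed) domain of pairs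
(orthogonal `Q`, upper triangular `R` with non-negative diagonal), is compact. -/
theorem qr_mul_proper (n : ℕ) (K : Set (Matrix (Fin n) (Fin n) ℝ)) (hK : IsCompact K) :
    IsCompact {p : Matrix (Fin n) (Fin n) ℝ × Matrix (Fin n) (Fin n) ℝ |
      p.1ᵀ * p.1 = 1 ∧ (∀ i j, j < i → p.2 i j = 0) ∧ (∀ i, 0 ≤ p.2 i i) ∧
      p.1 * p.2 ∈ K} := by
  -- Since `R = Qᵀ (Q R)`, the preimage lies in the image of the compact set `O(n) × K`
  -- under the continuous map `(Q, A) ↦ (Q, Qᵀ A)`.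
  have hcomp := ((isCompact_orthogonal n).prod hK).image
    (f := fun p : Matrix (Fin n) (Fin n) ℝ × Matrix (Fin n) (Fin n) ℝ => (p.1, p.1ᵀ * p.2))
    (by fun_prop)
  refine hcomp.of_isClosed_subset ?_ ?_
  · have htri : IsClosed {p : Matrix (Fin n) (Fin n) ℝ × Matrix (Fin n) (Fin n) ℝ |
        ∀ i j, j < i → p.2 i j = 0} := by
      simp only [Set.ofPred_forall]
      exact isClosed_iInter fun i => isClosed_iInter fun j => isClosed_iInter fun _ =>
        isClosed_eq (continuous_snd.matrix_elem i j) continuous_const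
    have hdiag : IsClosed {p : Matrix (Fin n) (Fin n) ℝ × Matrix (Fin n) (Fin n) ℝ |
        ∀ i, 0 ≤ p.2 i i} := by
      simp only [Set.ofPred_forall]
      exact isClosed_iInter fun i =>
        isClosed_le continuous_const (continuous_snd.matrix_elem i i)
    exact (isClosed_eq (by fun_prop) continuous_const).inter
      (htri.inter (hdiag.inter (hK.isClosed.preimage (by fun_prop))))
  · rintro ⟨Q, R⟩ ⟨hQ, -, -, hmem⟩
    refine ⟨(Q, Q * R), ⟨hQ, hmem⟩, ?_⟩
    have hQ' : Qᵀ * Q = 1 := hQ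
    simp [← Matrix.mul_assoc, hQ']
end

section
/- Let Q be an n×n real orthogonal matrix and R an n×n real upper triangular matrix with strictly positive diagonal entries (in particular R is invertible). Suppose U and V are n×n real matrices such that QᵀU is skew-symmetric (equivalently UᵀQ + QᵀU = 0), V is upper triangular, and UR + QV = 0. Then U = 0 and V = 0. (This says the derivative of the multiplication map F(Q,R) = QR at (Q,R) is injective on the tangent space of the orthogonal group times upper triangular matrices.) -/
open Matrix

/-!
Put `S = Qᵀ U`, which is skew-symmetric. Multiplying `U R + Q V = 0` by `Qᵀ` on the left gives
`S R = -V`, so `S = -V R⁻¹`. Inverses and products of upper triangular matrices are upper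
triangular, hence so is `S`; a skew-symmetric upper triangular matrix vanishes. Then
`U = Q S = 0` and `V = -S R = 0`.
-/

/-- Injectivity of the derivative of `F(Q,R) = QR` at a point `(Q,R)` with `Q`
orthogonal and `R` upper triangular with positive diagonal: if `QᵀU` is
skew-symmetric, `V` is upper triangular and `UR + QV = 0`, then `U = V = 0`. -/
theorem qr_derivative_injective (n : ℕ) (Q R U V : Matrix (Fin n) (Fin n) ℝ)
    (hQ : Qᵀ * Q = 1)
    (hRtri : ∀ i j, j < i → R i j = 0)
    (hRdiag : ∀ i, 0 < R i i)
    (hU : Uᵀ * Q + Qᵀ * U = 0)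
    (hV : ∀ i j, j < i → V i j = 0)
    (h : U * R + Q * V = 0) :
    U = 0 ∧ V = 0 := by
  have hR : R.BlockTriangular id := fun i j hij => hRtri i j hij
  have hVt : V.BlockTriangular id := fun i j hij => hV i j hij
  have hdet : IsUnit R.det := by
    rw [det_of_isUpperTriangular hR]
    exact (Finset.prod_pos fun i _ => hRdiag i).ne'.isUnit
  have hSR : Qᵀ * U * R = -V := by
    have h1 : Qᵀ * (U * R + Q * V) = 0 := by rw [h, Matrix.mul_zero]
    rw [Matrix.mul_add, ← Matrix.mul_assoc, ← Matrix.mul_assoc, hQ, Matrix.one_mul] at h1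
    exact eq_neg_of_add_eq_zero_left h1
  have hS : (Qᵀ * U).BlockTriangular id := by
    have hSV : Qᵀ * U = -V * R⁻¹ := by
      rw [← hSR, Matrix.mul_nonsing_inv_cancel_right _ _ hdet]
    have : Invertible R := R.invertibleOfIsUnitDet hdet
    rw [hSV]
    exact hVt.neg.mul (blockTriangular_inv_of_blockTriangular hR)
  have hskew : ∀ i j, (Qᵀ * U) j i + (Qᵀ * U) i j = 0 := by
    intro i j
    have hT : Uᵀ * Q = (Qᵀ * U)ᵀ := by rw [transpose_mul, transpose_transpose]
    rw [hT] at hU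
    exact congrFun (congrFun hU i) j
  have hS0 : Qᵀ * U = 0 := by
    ext i j
    have hs := hskew i j
    rw [Matrix.zero_apply]
    rcases lt_trichotomy i j with hij | rfl | hij
    · have := hS (i := j) (j := i) hij
      linarith
    · linarith
    · exact hS hij
  constructor
  · rw [← Matrix.one_mul U, ← mul_eq_one_comm.mp hQ, Matrix.mul_assoc, hS0, Matrix.mul_zero]
  · rw [hS0, Matrix.zero_mul] at hSR
    exact neg_eq_zero.mp hSR.symm
end

section
/- Let L be an n×n real lower triangular matrix with strictly positive diagonal entries (hence invertible), and let V be an n×n real lower triangular matrix with LVᵀ + VLᵀ = 0. Then V = 0. (This says the derivative of the map L ↦ LLᵀ at L is injective on lower triangular matrices.) -/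
/-! The columns of `V` vanish one after another. If the columns before `j` are zero, then the
`(i, j)` entry of `L * Vᵀ + V * Lᵀ` reduces to `L i j * V j j + V i j * L j j`: the terms with
index `k < j` vanish by induction, those with `k > j` by triangularity of row `j` of `L` and `V`.
Taking `i = j` gives `V j j = 0`, and then every `i` gives `V i j = 0`. -/

open Matrix

/-- Injectivity of the derivative of the Cholesky map `L ↦ LLᵀ`: if `L` is lower
triangular with strictly positive diagonal entries, `V` is lower triangular, and
`LVᵀ + VLᵀ = 0`, then `V = 0`. -/
theorem cholesky_derivative_injective (n : ℕ) (L V : Matrix (Fin n) (Fin n) ℝ)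
    (hLtri : ∀ i j, i < j → L i j = 0)
    (hLdiag : ∀ i, 0 < L i i)
    (hVtri : ∀ i j, i < j → V i j = 0)
    (h : L * Vᵀ + V * Lᵀ = 0) :
    V = 0 := by
  have col : ∀ j i, V i j = 0 := by
    intro j
    induction j using WellFoundedLT.induction with
    | ind j ih =>
      have key : ∀ i, L i j * V j j + V i j * L j j = 0 := by
        intro i
        have hij := congrFun (congrFun h i) j
        simp only [Matrix.add_apply, Matrix.mul_apply, Matrix.transpose_apply,
          Matrix.zero_apply, ← Finset.sum_add_distrib] at hij
        rw [Finset.sum_eq_single j] at hij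
        · exact hij
        · intro k _ hk
          rcases lt_or_gt_of_ne hk with hlt | hgt
          · rw [ih k hlt j, ih k hlt i]; ring
          · rw [hVtri j k hgt, hLtri j k hgt]; ring
        · simp
      have hjj : V j j = 0 := by
        have hmul : L j j * V j j = 0 := by linarith [key j]
        exact (mul_eq_zero.mp hmul).resolve_left (hLdiag j).ne'
      intro i
      have hi := key i
      rw [hjj, mul_zero, zero_add] at hi
      exact (mul_eq_zero.mp hi).resolve_right (hLdiag j).ne'
  ext i j
  exact col j i
end

section
/- Let L be an n×n real unit lower triangular matrix, D an invertible diagonal matrix, and U a unit upper triangular matrix. Suppose A is strictly lower triangular, S is diagonal, B is strictly upper triangular, and A·D·U + L·S·U + L·D·B = 0. Then A = 0, S = 0, and B = 0. (This says the derivative of the map (L,D,U) ↦ LDU at (L,D,U) is injective.) -/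
/-!
With `D` and `S` diagonal, the `(i, j)` entry of `A D U + L S U + L D B` is
`∑ m, (A i m * d m * U m j + L i m * s m * U m j + L i m * d m * B m j)`.
Strong induction on `k` shows that column `k` of `A`, the entry `s k` and row `k` of `B` vanish.
The terms with `m < k` vanish by induction, and in column `k` (resp. row `k`) the terms with
`m > k` vanish because `U`, `B` are upper (resp. `A`, `L` are lower) triangular, so only `m = k`
survives: the `(i, k)` entry reads `A i k * d k + L i k * s k = 0`, which gives `s k = 0` at
`i = k` and then `A i k = 0`; the `(k, j)` entry then reads `d k * B k j = 0`.
-/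

/-- Injectivity of the derivative of `(L,D,U) ↦ LDU`: if `L` is unit lower
triangular, `D` is invertible diagonal, `U` is unit upper triangular, `A` is
strictly lower triangular, `S` is diagonal, `B` is strictly upper triangular and
`ADU + LSU + LDB = 0`, then `A = S = B = 0`. -/
theorem ldu_derivative_injective (n : ℕ) (L D U A S B : Matrix (Fin n) (Fin n) ℝ)
    (hLtri : ∀ i j, i < j → L i j = 0) (hLdiag : ∀ i, L i i = 1)
    (hDdiag : ∀ i j, i ≠ j → D i j = 0) (hDinv : ∀ i, D i i ≠ 0)
    (hUtri : ∀ i j, j < i → U i j = 0) (hUdiag : ∀ i, U i i = 1)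
    (hA : ∀ i j, i ≤ j → A i j = 0)
    (hS : ∀ i j, i ≠ j → S i j = 0)
    (hB : ∀ i j, j ≤ i → B i j = 0)
    (h : A * D * U + L * S * U + L * D * B = 0) :
    A = 0 ∧ S = 0 ∧ B = 0 := by
  have entry : ∀ i j, ∑ m, (A i m * D m m * U m j + L i m * S m m * U m j
      + L i m * D m m * B m j) = 0 := by
    have hD : D = Matrix.diagonal fun i => D i i := by
      ext i j
      by_cases hij : i = j
      · subst hij; simp
      · simp [hij, hDdiag i j hij]
    have hS' : S = Matrix.diagonal fun i => S i i := by
      ext i j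
      by_cases hij : i = j
      · subst hij; simp
      · simp [hij, hS i j hij]
    intro i j
    have hij := congrFun (congrFun h i) j
    rw [hD, hS'] at hij
    simpa only [Matrix.add_apply, Matrix.mul_apply (M := _ * _), Matrix.mul_diagonal,
      Matrix.zero_apply, ← Finset.sum_add_distrib] using hij
  have key : ∀ k, (∀ i, A i k = 0) ∧ S k k = 0 ∧ ∀ j, B k j = 0 := by
    intro k
    induction k using WellFoundedLT.induction with
    | ind k ih =>
    have col : ∀ i, A i k * D k k + L i k * S k k = 0 := by
      intro i
      have e := entry i k
      rw [Finset.sum_eq_single k] at e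
      · simpa [hUdiag, hB k k le_rfl] using e
      · intro m _ hm
        rcases lt_or_gt_of_ne hm with hm | hm
        · obtain ⟨h1, h2, h3⟩ := ih m hm
          simp [h1, h2, h3]
        · simp [hUtri m k hm, hB m k hm.le]
      · simp
    have hs : S k k = 0 := by simpa [hA k k le_rfl, hLdiag] using col k
    refine ⟨fun i => ?_, hs, fun j => ?_⟩
    · simpa [hs, hDinv k] using col i
    · have e := entry k j
      rw [Finset.sum_eq_single k] at e
      · simpa [hs, hA k k le_rfl, hLdiag, hDinv k] using e
      · intro m _ hm
        rcases lt_or_gt_of_ne hm with hm | hm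
        · obtain ⟨h1, h2, h3⟩ := ih m hm
          simp [h1, h2, h3]
        · simp [hLtri k m hm, hA k m hm.le]
      · simp
  refine ⟨?_, ?_, ?_⟩
  · ext i j
    exact (key j).1 i
  · ext i j
    by_cases hij : i = j
    · subst hij
      exact (key i).2.1
    · exact hS i j hij
  · ext i j
    exact (key i).2.2 j
end
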